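/- arXiv:2310.09287 — 2 statements merged into one kernel-verified Lean document; each statement's English description precedes it below -/
import Mathlib

section
/- Let S = ⟨m, am+1, bm+t⟩ be a MANS-semigroup with embedding dimension 3, where m ≥ 3, a ≥ 1, t ∈ {2, …, m−1}, and (t−1)(am+1) < bm+t < t(am+1). Set q = ⌊(m−1)/t⌋ and r = (m−1) mod t. If t divides m, then PF(S) = {q(bm+t) + r(am+1) − m}; if t does not divide m, then PF(S) = {(q−1)(bm+t) + (t−1)(am+1) − m, q(bm+t) + r(am+1) − m}. -/
/-- `S ⊆ ℕ` is a numerical semigroup: contains `0`, closed under addition,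
and has finite complement in `ℕ`. -/
def IsNumSgp (S : Set ℕ) : Prop :=
  0 ∈ S ∧ (∀ a ∈ S, ∀ b ∈ S, a + b ∈ S) ∧ Sᶜ.Finite

/-- `⟨A⟩`: the additive submonoid of `ℕ` generated by `A`, viewed as a set. -/
def gen (A : Set ℕ) : Set ℕ := (AddSubmonoid.closure A : Set ℕ)

/-- The multiplicity `m(S)`: the least nonzero element of `S`. -/
noncomputable def nsMult (S : Set ℕ) : ℕ := sInf {x | x ∈ S ∧ x ≠ 0}

/-- The minimal system of generators of `S`: the nonzero elements of `S` that are
not a sum of two nonzero elements of `S`. -/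
def msg (S : Set ℕ) : Set ℕ :=
  {x | x ∈ S ∧ x ≠ 0 ∧ ∀ a ∈ S, a ≠ 0 → ∀ b ∈ S, b ≠ 0 → x ≠ a + b}

/-- The ratio `r(S)`: the second smallest minimal generator of `S`. -/
noncomputable def nsRatio (S : Set ℕ) : ℕ := sInf (msg S \ {nsMult S})

/-- The maximum minimal generator `M(S)`. -/
noncomputable def nsMaxGen (S : Set ℕ) : ℕ := sSup (msg S)

/-- The Apéry set `Ap(S, n) = {s ∈ S : s - n ∉ S}`. -/
def AperySet (S : Set ℕ) (n : ℕ) : Set ℕ :=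
  {s | s ∈ S ∧ ¬ ∃ y ∈ S, y + n = s}

/-- `w(i)`: the least element of `S` congruent to `i` modulo `n`. -/
noncomputable def aperyW (S : Set ℕ) (n i : ℕ) : ℕ :=
  sInf {s | s ∈ S ∧ s % n = i % n}

/-- A MANS-semigroup: a numerical semigroup whose Apéry set with respect to the
multiplicity is monotone, i.e. `w(1) < w(2) < ⋯ < w(m(S) - 1)`. -/
def IsMANS (S : Set ℕ) : Prop :=
  IsNumSgp S ∧ ∀ i : ℕ, 0 < i → i + 1 < nsMult S →
    aperyW S (nsMult S) i < aperyW S (nsMult S) (i + 1)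

/-- The Frobenius number `F(S)`: the greatest integer not in `S`. -/
noncomputable def nsFrob (S : Set ℕ) : ℕ := sSup {x | x ∉ S}

/-- The genus `g(S)`: the number of gaps of `S`. -/
noncomputable def nsGenus (S : Set ℕ) : ℕ := Set.ncard {x | x ∉ S}

/-- The set of pseudo-Frobenius numbers of `S`: integers `x ∉ S` such that
`x + s ∈ S` for every nonzero `s ∈ S`. -/
def nsPF (S : Set ℕ) : Set ℤ :=
  {x : ℤ | x ∉ ((Nat.cast : ℕ → ℤ) '' S) ∧
    ∀ s ∈ S, s ≠ 0 → x + (s : ℤ) ∈ ((Nat.cast : ℕ → ℤ) '' S)}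

/-- The type `t(S)`: the number of pseudo-Frobenius numbers of `S`. -/
noncomputable def nsType (S : Set ℕ) : ℕ := (nsPF S).ncard

/-- `S` is pseudo-symmetric iff `F(S) = 2 g(S) - 2`. -/
def IsPseudoSymmetric (S : Set ℕ) : Prop :=
  (nsFrob S : ℤ) = 2 * (nsGenus S : ℤ) - 2

/-!
With `u = am + 1` and `v = bm + t`, the inequalities `(t - 1) u < v < t u` say that, among all sums
of `u`s and `v`s, the cheapest one in the residue class of `i < m` modulo `m` is the greedy one
`w i = ⌊i / t⌋ v + (i mod t) u`, and that `w` is strictly increasing. So `w 0 < ⋯ < w (m - 1)` are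
the least elements of `S` in their classes, and every pseudo-Frobenius number is `w i - m` for some
`i < m`. Now `w (i + 1) = w i + u`, too large for `w i - m + u` to lie in `S`, unless `i + 1` is a
multiple of `t` or wraps around to `m`; and `w i - m + v ∈ S` iff `i + t` wraps around, that is, iff
`m ≤ i + t`. Since `(m - t, m]` contains a single multiple of `t`, only `i + 1 = m` and
`i + 1 = ⌊m / t⌋ t` survive, and these agree exactly when `t ∣ m`.
-/

theorem subset_gen (A : Set ℕ) : A ⊆ gen A :=
  AddSubmonoid.subset_closure

theorem mem_gen_triple {x y z n : ℕ} :
    n ∈ gen {x, y, z} ↔ ∃ i j k : ℕ, i * x + j * y + k * z = n := by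
  simp only [gen, SetLike.mem_coe, Set.insert_eq x, AddSubmonoid.closure_union,
    AddSubmonoid.mem_sup, AddSubmonoid.mem_closure_singleton, AddSubmonoid.mem_closure_pair,
    smul_eq_mul]
  constructor
  · rintro ⟨_, ⟨i, rfl⟩, _, ⟨j, k, rfl⟩, rfl⟩
    exact ⟨i, j, k, add_assoc _ _ _⟩
  · rintro ⟨i, j, k, rfl⟩
    exact ⟨_, ⟨i, rfl⟩, _, ⟨j, k, rfl⟩, (add_assoc _ _ _).symm⟩

theorem mem_nsPF_gen {A : Set ℕ} {x : ℤ} :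
    x ∈ nsPF (gen A) ↔ x ∉ (Nat.cast : ℕ → ℤ) '' gen A ∧
      ∀ g ∈ A, g ≠ 0 → x + (g : ℤ) ∈ (Nat.cast : ℕ → ℤ) '' gen A := by
  refine and_congr_right fun _ => ⟨fun h g hg => h g (subset_gen A hg), fun h s hs => ?_⟩
  induction hs using AddSubmonoid.closure_induction with
  | mem g hg => exact h g hg
  | zero => exact fun h0 => absurd rfl h0
  | add g s _ hs ihg ihs =>
    intro hne
    rcases eq_or_ne g 0 with rfl | hg
    · rw [zero_add] at hne ⊢
      exact ihs hne
    · obtain ⟨n, hn, hxg⟩ := ihg hg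
      exact ⟨n + s, add_mem hn hs, by rw [Nat.cast_add, hxg, Nat.cast_add, add_assoc]⟩

/-- The cost of paying `i` greedily with units of price `u` and blocks of `t` units of price `v`.
In a MANS-semigroup `⟨m, u, v⟩`, where `u ≡ 1` and `v ≡ t` modulo `m`, it is for `i < m` the Apéry
element `w(i)`. -/
def greedyCost (u v t i : ℕ) : ℕ := i / t * v + i % t * u

section GreedyCost

variable {m u v t i : ℕ}

theorem greedyCost_of_lt (h : i < t) : greedyCost u v t i = i * u := by
  rw [greedyCost, Nat.div_eq_of_lt h, Nat.mod_eq_of_lt h, zero_mul, zero_add]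

theorem greedyCost_mul_add (ht : 0 < t) (z i : ℕ) :
    greedyCost u v t (z * t + i) = z * v + greedyCost u v t i := by
  rw [greedyCost, greedyCost, Nat.mul_add_mod', Nat.add_comm (z * t), Nat.add_mul_div_right _ _ ht]
  ring

theorem greedyCost_mul_sub_one (ht : 0 < t) {z : ℕ} (hz : 0 < z) :
    greedyCost u v t (z * t - 1) = (z - 1) * v + (t - 1) * u := by
  obtain ⟨z, rfl⟩ := Nat.exists_eq_add_one.mpr hz
  rw [add_one_mul, Nat.add_sub_assoc ht, greedyCost_mul_add ht,
    greedyCost_of_lt (Nat.sub_one_lt_of_lt ht), Nat.add_sub_cancel]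

theorem greedyCost_add_one_of_dvd (h : t ∣ i + 1) :
    greedyCost u v t (i + 1) + (t - 1) * u = greedyCost u v t i + v := by
  obtain ⟨z, hz⟩ := h
  have hpos : 0 < t * z := hz ▸ Nat.succ_pos i
  have ht : 0 < t := Nat.pos_of_mul_pos_right hpos
  have hz0 : 0 < z := Nat.pos_of_mul_pos_left hpos
  have hi : i = z * t - 1 := by rw [mul_comm, ← hz, Nat.add_sub_cancel]
  have hsucc : greedyCost u v t (i + 1) = z * v := by
    rw [hz, mul_comm, ← add_zero (z * t), greedyCost_mul_add ht, greedyCost_of_lt ht, zero_mul,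
      add_zero]
  rw [hsucc, hi, greedyCost_mul_sub_one ht hz0, add_right_comm, ← add_one_mul,
    Nat.sub_one_add_one hz0.ne']

theorem greedyCost_add_one_of_not_dvd (h : ¬ t ∣ i + 1) :
    greedyCost u v t (i + 1) = greedyCost u v t i + u := by
  have hdiv : (i + 1) / t = i / t := Nat.succ_div_of_not_dvd h
  have hmod : (i + 1) % t = i % t + 1 := by
    have h₁ := Nat.div_add_mod (i + 1) t
    have h₂ := Nat.div_add_mod i t
    rw [hdiv] at h₁
    omega
  rw [greedyCost, greedyCost, hdiv, hmod]
  ring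

theorem greedyCost_strictMono (hu : 0 < u) (hv : (t - 1) * u < v) :
    StrictMono (greedyCost u v t) := by
  refine strictMono_nat_of_lt_succ fun i => ?_
  by_cases h : t ∣ i + 1
  · have hstep := greedyCost_add_one_of_dvd (u := u) (v := v) h
    omega
  · rw [greedyCost_add_one_of_not_dvd h]
    exact Nat.lt_add_of_pos_right hu

theorem greedyCost_mul_add_le (ht : 0 < t) (hv : v ≤ t * u) (z y : ℕ) :
    greedyCost u v t (z * t + y) ≤ z * v + y * u := by
  rw [greedyCost_mul_add ht]
  gcongr
  calc y / t * v + y % t * u ≤ y / t * (t * u) + y % t * u := by gcongr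
    _ = (y / t * t + y % t) * u := by ring
    _ = y * u := by rw [Nat.div_add_mod']

theorem greedyCost_modEq (hu : u ≡ 1 [MOD m]) (hv : v ≡ t [MOD m]) (i : ℕ) :
    greedyCost u v t i ≡ i [MOD m] :=
  calc i / t * v + i % t * u ≡ i / t * t + i % t * 1 [MOD m] :=
        (hv.mul_left _).add (hu.mul_left _)
    _ = i := by rw [mul_one, Nat.div_add_mod']

end GreedyCost

theorem eq_div_mul_iff_dvd_and_le_and_lt {m t n : ℕ} (ht : 0 < t) :
    n = m / t * t ↔ t ∣ n ∧ n ≤ m ∧ m < n + t := by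
  constructor
  · rintro rfl
    exact ⟨Nat.dvd_mul_left _ _, Nat.div_mul_le_self m t, Nat.lt_div_mul_add ht⟩
  · rintro ⟨⟨z, rfl⟩, hle, hlt⟩
    have hz : m / t = z := Nat.div_eq_of_lt_le (by linarith) (by linarith)
    rw [hz, mul_comm]

/-- The generators `m`, `u`, `v` of a MANS-semigroup of embedding dimension 3, described by their
residues instead of by the quotients `a`, `b` in `u = am + 1` and `v = bm + t`. The degenerate case
`t = 1`, in which `u` is redundant, is included. -/
structure IsMANSTriple (m u v t : ℕ) : Prop where
  modEq_one : u ≡ 1 [MOD m]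
  modEq : v ≡ t [MOD m]
  lt : t < m
  lower : (t - 1) * u < v
  upper : v < t * u

namespace IsMANSTriple

variable {m u v t i : ℕ}

theorem t_pos (h : IsMANSTriple m u v t) : 0 < t :=
  Nat.pos_of_mul_pos_right (Nat.zero_lt_of_lt h.upper)

theorem u_pos (h : IsMANSTriple m u v t) : 0 < u :=
  Nat.pos_of_mul_pos_left (Nat.zero_lt_of_lt h.upper)

theorem v_pos (h : IsMANSTriple m u v t) : 0 < v :=
  Nat.zero_lt_of_lt h.lower

theorem m_pos (h : IsMANSTriple m u v t) : 0 < m :=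
  Nat.zero_lt_of_lt h.lt

theorem v_add_m_le (h : IsMANSTriple m u v t) : v + m ≤ t * u := by
  have hmod : v ≡ t * u [MOD m] :=
    h.modEq.trans (by simpa using h.modEq_one.symm.mul_left t)
  exact hmod.add_le_of_lt h.upper

theorem greedyCost_strictMono (h : IsMANSTriple m u v t) : StrictMono (greedyCost u v t) :=
  _root_.greedyCost_strictMono h.u_pos h.lower

theorem greedyCost_modEq (h : IsMANSTriple m u v t) (i : ℕ) : greedyCost u v t i ≡ i [MOD m] :=
  _root_.greedyCost_modEq h.modEq_one h.modEq i

theorem mem_gen_iff (h : IsMANSTriple m u v t) {n : ℕ} (hi : i < m) (hn : n ≡ i [MOD m]) :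
    n ∈ gen {m, u, v} ↔ greedyCost u v t i ≤ n := by
  rw [mem_gen_triple]
  constructor
  · rintro ⟨x, y, z, rfl⟩
    have hres : z * t + y ≡ i [MOD m] :=
      calc z * t + y = 0 + y * 1 + z * t := by ring
        _ ≡ x * m + y * u + z * v [MOD m] :=
          ((Nat.modEq_zero_iff_dvd.mpr (Nat.dvd_mul_left m x)).symm.add
            (h.modEq_one.symm.mul_left y)).add (h.modEq.symm.mul_left z)
        _ ≡ i [MOD m] := hn
    have hle : i ≤ z * t + y := Nat.mod_eq_of_lt hi ▸ hres ▸ Nat.mod_le _ m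
    calc greedyCost u v t i ≤ greedyCost u v t (z * t + y) := h.greedyCost_strictMono.monotone hle
      _ ≤ z * v + y * u := greedyCost_mul_add_le h.t_pos h.upper.le z y
      _ ≤ x * m + y * u + z * v := by linarith [Nat.zero_le (x * m)]
  · intro hle
    obtain ⟨x, hx⟩ := (Nat.modEq_iff_dvd' hle).mp ((h.greedyCost_modEq i).trans hn.symm)
    refine ⟨x, i % t, i / t, ?_⟩
    rw [greedyCost] at hx hle
    linarith [Nat.sub_add_cancel hle, mul_comm m x]

theorem mem_cast_gen_iff (h : IsMANSTriple m u v t) {x : ℤ} (hi : i < m)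
    (hx : x ≡ i [ZMOD m]) :
    x ∈ (Nat.cast : ℕ → ℤ) '' gen {m, u, v} ↔ (greedyCost u v t i : ℤ) ≤ x := by
  constructor
  · rintro ⟨n, hn, rfl⟩
    exact_mod_cast (h.mem_gen_iff hi (Int.natCast_modEq_iff.mp hx)).mp hn
  · intro hle
    lift x to ℕ using (Int.natCast_nonneg _).trans hle
    exact ⟨x, (h.mem_gen_iff hi (Int.natCast_modEq_iff.mp hx)).mpr (by exact_mod_cast hle), rfl⟩

theorem greedyCost_sub_add_modEq (h : IsMANSTriple m u v t) {g j : ℕ} (hg : g ≡ j [MOD m]) (i : ℕ) :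
    (greedyCost u v t i : ℤ) - m + g ≡ (i + j : ℕ) [ZMOD m] := by
  have hadd : (greedyCost u v t i + g : ℤ) ≡ (i + j : ℕ) [ZMOD m] := by
    exact_mod_cast Int.natCast_modEq_iff.mpr ((h.greedyCost_modEq i).add hg)
  rw [sub_add_eq_add_sub]
  exact Int.sub_modulus_modEq_iff.mpr hadd

theorem exists_eq_greedyCost_sub (h : IsMANSTriple m u v t) {x : ℤ}
    (hx : x ∉ (Nat.cast : ℕ → ℤ) '' gen {m, u, v})
    (hxm : x + m ∈ (Nat.cast : ℕ → ℤ) '' gen {m, u, v}) :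
    ∃ i < m, x = greedyCost u v t i - m := by
  obtain ⟨i, hi, hix⟩ := Int.existsUnique_equiv_nat x (Int.natCast_pos.mpr h.m_pos)
  replace hi : i < m := by exact_mod_cast hi
  rw [h.mem_cast_gen_iff hi hix.symm] at hx
  rw [h.mem_cast_gen_iff hi (Int.add_modulus_modEq_iff.mpr hix.symm)] at hxm
  have hdvd : (m : ℤ) ∣ x + m - greedyCost u v t i :=
    ((Int.natCast_modEq_iff.mpr (h.greedyCost_modEq i)).trans
      (hix.trans (Int.add_modulus_modEq_iff.mpr rfl).symm)).dvd
  have hzero : x + m - greedyCost u v t i = 0 :=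
    Int.eq_zero_of_dvd_of_nonneg_of_lt (by linarith) (by linarith) hdvd
  exact ⟨i, hi, by linarith⟩

theorem greedyCost_sub_notMem (h : IsMANSTriple m u v t) (hi : i < m) :
    (greedyCost u v t i : ℤ) - m ∉ (Nat.cast : ℕ → ℤ) '' gen {m, u, v} := by
  have hres : (greedyCost u v t i : ℤ) - m ≡ i [ZMOD m] :=
    Int.sub_modulus_modEq_iff.mpr (Int.natCast_modEq_iff.mpr (h.greedyCost_modEq i))
  rw [h.mem_cast_gen_iff hi hres]
  have hm := h.m_pos
  lia

theorem greedyCost_sub_add_unit_mem_iff (h : IsMANSTriple m u v t) (hi : i < m) :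
    (greedyCost u v t i : ℤ) - m + u ∈ (Nat.cast : ℕ → ℤ) '' gen {m, u, v} ↔
      i + 1 = m ∨ t ∣ i + 1 := by
  have hres := h.greedyCost_sub_add_modEq h.modEq_one i
  rcases (Nat.succ_le_of_lt hi).eq_or_lt with heq | hlt
  · have hres₀ : (greedyCost u v t i : ℤ) - m + u ≡ (0 : ℕ) [ZMOD m] :=
      hres.trans (Int.natCast_modEq_iff.mpr (by simp [Nat.ModEq, ← heq]))
    rw [h.mem_cast_gen_iff h.m_pos hres₀, greedyCost_of_lt h.t_pos]
    have hi_le : i ≤ greedyCost u v t i := h.greedyCost_strictMono.le_apply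
    have hu := h.u_pos
    lia
  · rw [h.mem_cast_gen_iff hlt hres]
    by_cases hdvd : t ∣ i + 1
    · have hgap := h.v_add_m_le
      have hstep := greedyCost_add_one_of_dvd (u := u) (v := v) hdvd
      have htu : (t - 1) * u + u = t * u := by rw [← add_one_mul, Nat.sub_one_add_one h.t_pos.ne']
      simp only [hdvd, or_true, iff_true]
      lia
    · simp only [greedyCost_add_one_of_not_dvd hdvd, hdvd, or_false, hlt.ne]
      lia

theorem greedyCost_sub_add_block_mem_iff (h : IsMANSTriple m u v t) (hi : i < m) :
    (greedyCost u v t i : ℤ) - m + v ∈ (Nat.cast : ℕ → ℤ) '' gen {m, u, v} ↔ m ≤ i + t := by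
  have hres := h.greedyCost_sub_add_modEq h.modEq i
  have hadd : greedyCost u v t (i + t) = v + greedyCost u v t i := by
    simpa [add_comm] using greedyCost_mul_add (u := u) (v := v) h.t_pos 1 i
  rcases le_or_gt m (i + t) with hle | hlt
  · obtain ⟨j, hj⟩ := Nat.exists_eq_add_of_le hle
    have hjm : j < m := by linarith [h.lt]
    rw [hj, Nat.cast_add, Int.modEq_modulus_add_iff] at hres
    have hshift : m + greedyCost u v t j ≤ greedyCost u v t (i + t) :=
      hj ▸ h.greedyCost_strictMono.add_le_nat m j
    rw [h.mem_cast_gen_iff hjm hres]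
    lia
  · rw [h.mem_cast_gen_iff hlt hres, hadd]
    have hm := h.m_pos
    lia

theorem greedyCost_sub_mem_nsPF_iff (h : IsMANSTriple m u v t) (hi : i < m) :
    (greedyCost u v t i : ℤ) - m ∈ nsPF (gen {m, u, v}) ↔
      i + 1 = m / t * t ∨ i + 1 = m := by
  have hmem : (greedyCost u v t i : ℤ) ∈ (Nat.cast : ℕ → ℤ) '' gen {m, u, v} :=
    ⟨_, (h.mem_gen_iff hi (h.greedyCost_modEq i)).mpr le_rfl, rfl⟩
  have hpf : (greedyCost u v t i : ℤ) - m ∈ nsPF (gen {m, u, v}) ↔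
      (i + 1 = m ∨ t ∣ i + 1) ∧ m ≤ i + t := by
    simp [mem_nsPF_gen, h.greedyCost_sub_notMem hi, hmem, h.m_pos.ne', h.u_pos.ne', h.v_pos.ne',
      h.greedyCost_sub_add_unit_mem_iff hi, h.greedyCost_sub_add_block_mem_iff hi,
      -Set.mem_image]
  rw [hpf, eq_div_mul_iff_dvd_and_le_and_lt h.t_pos]
  have ht := h.t_pos
  grind

theorem nsPF_gen (h : IsMANSTriple m u v t) :
    nsPF (gen {m, u, v}) =
      {(greedyCost u v t (m / t * t - 1) : ℤ) - m, (greedyCost u v t (m - 1) : ℤ) - m} := by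
  have hlast : 0 < m / t * t := Nat.mul_pos (Nat.div_pos h.lt.le h.t_pos) h.t_pos
  have hlast_le : m / t * t ≤ m := Nat.div_mul_le_self m t
  have hm := h.m_pos
  ext x
  rw [Set.mem_insert_iff, Set.mem_singleton_iff]
  constructor
  · intro hx
    obtain ⟨hnot, hadd⟩ := mem_nsPF_gen.mp hx
    obtain ⟨i, hi, rfl⟩ := h.exists_eq_greedyCost_sub hnot (hadd m (by simp) hm.ne')
    rcases (h.greedyCost_sub_mem_nsPF_iff hi).mp hx with heq | heq
    · exact Or.inl (by rw [← heq, Nat.add_sub_cancel])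
    · exact Or.inr (by rw [← heq, Nat.add_sub_cancel])
  · rintro (rfl | rfl)
    · exact (h.greedyCost_sub_mem_nsPF_iff (by lia)).mpr (Or.inl (by lia))
    · exact (h.greedyCost_sub_mem_nsPF_iff (by lia)).mpr (Or.inr (by lia))

end IsMANSTriple

theorem stmt14 (m a b t q r : ℕ) (hm : 3 ≤ m) (ha : 1 ≤ a) (ht2 : 2 ≤ t) (htm : t ≤ m - 1)
    (h1 : (t - 1) * (a * m + 1) < b * m + t) (h2 : b * m + t < t * (a * m + 1))
    (hq : q = (m - 1) / t) (hr : r = (m - 1) % t) :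
    (t ∣ m → nsPF (gen {m, a * m + 1, b * m + t}) =
        {(q : ℤ) * (b * m + t) + (r : ℤ) * (a * m + 1) - m}) ∧
    (¬ t ∣ m → nsPF (gen {m, a * m + 1, b * m + t}) =
        {((q : ℤ) - 1) * (b * m + t) + ((t : ℤ) - 1) * (a * m + 1) - m,
         (q : ℤ) * (b * m + t) + (r : ℤ) * (a * m + 1) - m}) := by
  have h : IsMANSTriple m (a * m + 1) (b * m + t) t :=
    ⟨by simp [Nat.ModEq], by simp [Nat.ModEq], by lia, h1, h2⟩
  have hlast : greedyCost (a * m + 1) (b * m + t) t (m - 1) =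
      q * (b * m + t) + r * (a * m + 1) := by
    rw [greedyCost, ← hq, ← hr]
  constructor
  · intro hdvd
    rw [h.nsPF_gen, Nat.div_mul_cancel hdvd, Set.pair_eq_singleton, hlast]
    push_cast
    rfl
  · intro hndvd
    have hdiv : m / t = q := by
      obtain ⟨k, rfl⟩ := Nat.exists_eq_add_one.mpr h.m_pos
      rw [Nat.succ_div_of_not_dvd hndvd, hq, Nat.add_sub_cancel]
    have hq_pos : 0 < q := hdiv ▸ Nat.div_pos h.lt.le h.t_pos
    rw [h.nsPF_gen, hdiv, greedyCost_mul_sub_one h.t_pos hq_pos, hlast]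
    push_cast [Nat.cast_pred hq_pos, Nat.cast_pred h.t_pos]
    rfl
end

section
/- Let S be a MANS-semigroup with msg(S) = {n₁ < n₂ < ⋯ < n_e < n_{e+1}}, where e ≥ 2. Then S' = ⟨n₁, n₂, …, n_e⟩ (the semigroup generated by all minimal generators except the largest) is a MANS-semigroup with e(S') = e(S) − 1. -/
/-! A numerical semigroup `S` with multiplicity `m` is MANS exactly when every `s ∈ S` not divisible
by `m` has a smaller `x ∈ S` with `x + 1 ≡ s [MOD m]`. This descent property passes from summands to
sums, so for a generated monoid only the generators matter. Let `A` be an initial segment of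
`msg S`. An element of `S` smaller than some `g ∈ A` is a sum of minimal generators smaller than
`g`, hence lies in `⟨A⟩`; so the descents of the generators in `A` stay inside `⟨A⟩`. If `A` has a
second element besides `m`, descending from it ends in an element of `⟨A⟩` congruent to `1` modulo
`m`; being coprime to `m`, it makes `⟨A⟩` cofinite. -/

/-- `S` descends modulo `m`: below every element of `S` in a nonzero residue class modulo `m` lies
an element of `S` in the preceding class. For `m = m(S)` this restates the monotonicity of
`Ap(S, m)` in terms of all elements of `S`, so that it can be checked on generators. -/
def DescendsMod (m : ℕ) (S : Set ℕ) : Prop :=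
  ∀ s ∈ S, ¬ m ∣ s → ∃ x ∈ S, x < s ∧ x + 1 ≡ s [MOD m]

/-- A numerical semigroup as a submonoid of `ℕ`, giving access to the algebra of `AddSubmonoid`. -/
def IsNumSgp.toAddSubmonoid {S : Set ℕ} (hS : IsNumSgp S) : AddSubmonoid ℕ where
  carrier := S
  zero_mem' := hS.1
  add_mem' ha hb := hS.2.1 _ ha _ hb

section MinimalGenerators

variable {A S T : Set ℕ} {M : AddSubmonoid ℕ} {a g m x : ℕ}

theorem exists_eq_add_of_notMem_msg (hx : x ∈ S) (hx₀ : x ≠ 0) (hxS : x ∉ msg S) :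
    ∃ a ∈ S, a ≠ 0 ∧ ∃ b ∈ S, b ≠ 0 ∧ x = a + b := by
  by_contra! h
  exact hxS ⟨hx, hx₀, h⟩

theorem mem_gen_msg_inter_Iic (hx : x ∈ S) : x ∈ gen (msg S ∩ Set.Iic x) := by
  induction x using Nat.strong_induction_on with
  | _ x ih =>
    rcases eq_or_ne x 0 with rfl | hx₀
    · exact AddSubmonoid.zero_mem _
    by_cases hxS : x ∈ msg S
    · exact AddSubmonoid.subset_closure ⟨hxS, Set.self_mem_Iic⟩
    obtain ⟨a, ha, ha₀, b, hb, hb₀, rfl⟩ := exists_eq_add_of_notMem_msg hx hx₀ hxS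
    have mem_of_lt {y : ℕ} (hy : y ∈ S) (hlt : y < a + b) : y ∈ gen (msg S ∩ Set.Iic (a + b)) :=
      AddSubmonoid.closure_mono
        (Set.inter_subset_inter_right _ (Set.Iic_subset_Iic.2 hlt.le)) (ih y hlt hy)
    exact AddSubmonoid.add_mem _ (mem_of_lt ha (by omega)) (mem_of_lt hb (by omega))

theorem mem_gen_of_le (hA : ∀ a ∈ A, msg S ∩ Set.Iic a ⊆ A) (ha : a ∈ A) (hx : x ∈ S)
    (hxa : x ≤ a) : x ∈ gen A :=
  AddSubmonoid.closure_mono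
    ((Set.inter_subset_inter_right _ (Set.Iic_subset_Iic.2 hxa)).trans (hA a ha))
    (mem_gen_msg_inter_Iic hx)

theorem msg_gen_subset (A : Set ℕ) : msg (gen A) ⊆ A := by
  intro x hx
  induction hx.1 using AddSubmonoid.closure_induction with
  | mem x hxA => exact hxA
  | zero => exact absurd rfl hx.2.1
  | add a b ha hb iha ihb =>
    rcases eq_or_ne a 0 with rfl | ha₀
    · simpa only [zero_add] using ihb (by simpa only [zero_add] using hx)
    rcases eq_or_ne b 0 with rfl | hb₀
    · simpa only [add_zero] using iha (by simpa only [add_zero] using hx)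
    exact absurd rfl (hx.2.2 a ha ha₀ b hb hb₀)

theorem mem_msg_of_subset (hTS : T ⊆ S) (hxS : x ∈ msg S) (hxT : x ∈ T) : x ∈ msg T :=
  ⟨hxT, hxS.2.1, fun a ha ha₀ b hb => hxS.2.2 a (hTS ha) ha₀ b (hTS hb)⟩

theorem gen_subset_of_subset_msg (hA : A ⊆ msg M) : gen A ⊆ M :=
  AddSubmonoid.closure_le.2 fun _ ha => (hA ha).1

theorem msg_gen_of_subset_msg (hA : A ⊆ msg M) : msg (gen A) = A :=
  (msg_gen_subset A).antisymm fun _ ha =>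
    mem_msg_of_subset (gen_subset_of_subset_msg hA) (hA ha) (AddSubmonoid.subset_closure ha)

theorem not_dvd_of_mem_msg (hm : m ∈ M) (hg : g ∈ msg M) (hgm : g ≠ m) : ¬ m ∣ g := by
  rintro ⟨q, rfl⟩
  obtain ⟨hm₀, hq₀⟩ := mul_ne_zero_iff.1 hg.2.1
  have hq₁ : q ≠ 1 := by rintro rfl; exact hgm (mul_one m)
  obtain ⟨q, rfl⟩ : ∃ r, q = r + 1 := Nat.exists_eq_succ_of_ne_zero hq₀
  have hmq : m * q ∈ M := by simpa only [smul_eq_mul, mul_comm] using M.nsmul_mem hm q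
  exact hg.2.2 (m * q) hmq (mul_ne_zero hm₀ (by omega)) m hm hm₀ (mul_add_one m q)

end MinimalGenerators

section MultiplicityAndApery

variable {S T : Set ℕ} {i m s x : ℕ}

theorem nsMult_le (hx : x ∈ S) (hx₀ : x ≠ 0) : nsMult S ≤ x :=
  Nat.sInf_le ⟨hx, hx₀⟩

theorem nsMult_mem_msg_of_mem (hx : x ∈ S) (hx₀ : x ≠ 0) : nsMult S ∈ msg S := by
  obtain ⟨hm, hm₀⟩ : nsMult S ∈ S ∧ nsMult S ≠ 0 :=
    Nat.sInf_mem (s := {x | x ∈ S ∧ x ≠ 0}) ⟨x, hx, hx₀⟩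
  refine ⟨hm, hm₀, fun a ha ha₀ b _ hb₀ hab => ?_⟩
  have := nsMult_le ha ha₀
  omega

theorem nsMult_eq_of_subset (hTS : T ⊆ S) (hm : nsMult S ∈ T) (hm₀ : nsMult S ≠ 0) :
    nsMult T = nsMult S := by
  have hT := nsMult_mem_msg_of_mem hm hm₀
  exact (nsMult_le hm hm₀).antisymm (nsMult_le (hTS hT.1) hT.2.1)

theorem IsNumSgp.exists_ge_mem (hS : IsNumSgp S) : ∃ N, ∀ x, N ≤ x → x ∈ S := by
  obtain ⟨B, hB⟩ := hS.2.2.bddAbove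
  refine ⟨B + 1, fun x hx => by_contra fun hxS => ?_⟩
  exact (hB hxS).not_gt hx

theorem IsNumSgp.nsMult_mem_msg (hS : IsNumSgp S) : nsMult S ∈ msg S := by
  obtain ⟨N, hN⟩ := hS.exists_ge_mem
  exact nsMult_mem_msg_of_mem (hN (N + 1) N.le_succ) N.succ_ne_zero

theorem aperyW_le (hs : s ∈ S) (hsi : s ≡ i [MOD m]) : aperyW S m i ≤ s :=
  Nat.sInf_le ⟨hs, hsi⟩

theorem IsNumSgp.aperyW_mem (hS : IsNumSgp S) (hm : m ≠ 0) (i : ℕ) :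
    aperyW S m i ∈ S ∧ aperyW S m i ≡ i [MOD m] := by
  obtain ⟨N, hN⟩ := hS.exists_ge_mem
  have hle : N ≤ i + m * N := le_add_left (Nat.le_mul_of_pos_left N (Nat.pos_of_ne_zero hm))
  exact Nat.sInf_mem (s := {s | s ∈ S ∧ s % m = i % m})
    ⟨i + m * N, hN _ hle, Nat.add_mul_mod_self_left i m N⟩

end MultiplicityAndApery

section Descent

variable {A S : Set ℕ} {M : AddSubmonoid ℕ} {c m s : ℕ}

theorem descendsMod_gen (hA : ∀ g ∈ A, ¬ m ∣ g → ∃ x ∈ gen A, x < g ∧ x + 1 ≡ g [MOD m]) :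
    DescendsMod m (gen A) := by
  intro s hs
  induction hs using AddSubmonoid.closure_induction with
  | mem g hg => exact hA g hg
  | zero => exact fun h => absurd (dvd_zero m) h
  | add a b ha hb iha ihb =>
    intro hab
    by_cases hma : m ∣ a
    · obtain ⟨x, hx, hlt, hmod⟩ := ihb fun hmb => hab (dvd_add hma hmb)
      exact ⟨a + x, AddSubmonoid.add_mem _ ha hx, by omega, hmod.add_left a⟩
    · obtain ⟨x, hx, hlt, hmod⟩ := iha hma
      refine ⟨x + b, AddSubmonoid.add_mem _ hx hb, by omega, ?_⟩
      simpa only [add_right_comm] using hmod.add_right b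

theorem DescendsMod.exists_modEq_one (hS : DescendsMod m S) (hs : s ∈ S) (hms : ¬ m ∣ s) :
    ∃ c ∈ S, c ≡ 1 [MOD m] := by
  induction s using Nat.strong_induction_on with
  | _ s ih =>
    obtain ⟨x, hx, hlt, hmod⟩ := hS s hs hms
    by_cases hmx : m ∣ x
    · exact ⟨s, hs, hmod.symm.trans ((Nat.modEq_zero_iff_dvd.2 hmx).add_right 1)⟩
    · exact ih x hlt hx hmx

theorem isNumSgp_of_coprime_mem (hm : m ∈ M) (hc : c ∈ M) (hmc : m.Coprime c) :
    IsNumSgp (M : Set ℕ) := by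
  have hgcd : Nat.setGcd (M : Set ℕ) = 1 :=
    Nat.eq_one_of_dvd_coprimes hmc (Nat.setGcd_dvd_of_mem hm) (Nat.setGcd_dvd_of_mem hc)
  obtain ⟨N, hN⟩ := Nat.exists_mem_closure_of_ge (M : Set ℕ)
  rw [AddSubmonoid.closure_eq, hgcd] at hN
  refine ⟨M.zero_mem, fun _ ha _ hb => M.add_mem ha hb, (Set.finite_Iio N).subset fun x hx => ?_⟩
  by_contra hxN
  exact hx (hN x (not_lt.1 hxN) (one_dvd x))

theorem DescendsMod.isNumSgp (hM : DescendsMod m M) (hm : m ∈ M) (hs : s ∈ M) (hms : ¬ m ∣ s) :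
    IsNumSgp (M : Set ℕ) := by
  obtain ⟨c, hc, hmod⟩ := hM.exists_modEq_one hs hms
  exact isNumSgp_of_coprime_mem hc hm (hmod.gcd_eq.trans (Nat.gcd_one_left m))

theorem IsMANS.descendsMod (hS : IsMANS S) : DescendsMod (nsMult S) S := by
  intro s hs hms
  have hm₀ := hS.1.nsMult_mem_msg.2.1
  have hlt : s % nsMult S < nsMult S := Nat.mod_lt s (Nat.pos_of_ne_zero hm₀)
  have hmod : s % nsMult S ≡ s [MOD nsMult S] := Nat.mod_modEq s _
  rcases hr : s % nsMult S with _ | _ | i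
  · exact absurd (Nat.dvd_of_mod_eq_zero hr) hms
  · have hs₀ : s ≠ 0 := by rintro rfl; exact hms (dvd_zero _)
    exact ⟨0, hS.1.1, Nat.pos_of_ne_zero hs₀, hr ▸ hmod⟩
  · rw [hr] at hlt hmod
    obtain ⟨hw, hwmod⟩ := hS.1.aperyW_mem hm₀ (i + 1)
    have hwlt := hS.2 (i + 1) i.succ_pos hlt
    exact ⟨_, hw, hwlt.trans_le (aperyW_le hs hmod.symm), (hwmod.add_right 1).trans hmod⟩

theorem DescendsMod.isMANS (hdesc : DescendsMod (nsMult S) S) (hS : IsNumSgp S) : IsMANS S := by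
  refine ⟨hS, fun i _ hi => ?_⟩
  obtain ⟨hw, hwmod⟩ := hS.aperyW_mem hS.nsMult_mem_msg.2.1 (i + 1)
  have hndvd : ¬ nsMult S ∣ aperyW S (nsMult S) (i + 1) := by
    rw [hwmod.dvd_iff dvd_rfl]
    exact Nat.not_dvd_of_pos_of_lt i.succ_pos hi
  obtain ⟨x, hx, hlt, hmod⟩ := hdesc _ hw hndvd
  exact (aperyW_le hx (Nat.ModEq.add_right_cancel' 1 (hmod.trans hwmod))).trans_lt hlt

end Descent

theorem IsMANS.gen_of_initialSegment {A S : Set ℕ} (hS : IsMANS S) (hA : A ⊆ msg S)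
    (hlow : ∀ a ∈ A, msg S ∩ Set.Iic a ⊆ A) (htwo : A.Nontrivial) : IsMANS (gen A) := by
  have hm : nsMult S ∈ msg S := hS.1.nsMult_mem_msg
  obtain ⟨g, hgA, hgm⟩ := htwo.exists_ne (nsMult S)
  have hmA : nsMult S ∈ gen A :=
    mem_gen_of_le hlow hgA hm.1 (nsMult_le (hA hgA).1 (hA hgA).2.1)
  have hmult : nsMult (gen A) = nsMult S :=
    nsMult_eq_of_subset (gen_subset_of_subset_msg (M := hS.1.toAddSubmonoid) hA) hmA hm.2.1
  have hdesc : DescendsMod (nsMult S) (gen A) := descendsMod_gen fun a ha hma => by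
    obtain ⟨x, hx, hlt, hmod⟩ := hS.descendsMod a (hA ha).1 hma
    exact ⟨x, mem_gen_of_le hlow ha hx hlt.le, hlt, hmod⟩
  have hndvd : ¬ nsMult S ∣ g :=
    not_dvd_of_mem_msg (M := hS.1.toAddSubmonoid) hm.1 (hA hgA) hgm
  have hnum : IsNumSgp (gen A) := hdesc.isNumSgp hmA (AddSubmonoid.subset_closure hgA) hndvd
  exact DescendsMod.isMANS (hmult ▸ hdesc) hnum

theorem stmt17_general {S : Set ℕ} {k e : ℕ} (hk : 2 ≤ k) (hke : k ≤ e) {n : Fin e → ℕ}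
    (hmono : StrictMono n) (hmsg : msg S = Set.range n) (hM : IsMANS S) :
    IsMANS (gen (Set.range fun i : Fin k => n (i.castLE hke))) ∧
      (msg (gen (Set.range fun i : Fin k => n (i.castLE hke)))).ncard = k := by
  have hinj : Function.Injective fun i : Fin k => n (i.castLE hke) :=
    hmono.injective.comp (Fin.castLE_injective hke)
  have hA : (Set.range fun i : Fin k => n (i.castLE hke)) ⊆ msg S :=
    hmsg ▸ Set.range_comp_subset_range (Fin.castLE hke) n
  refine ⟨hM.gen_of_initialSegment hA ?_ ?_, ?_⟩
  · rintro _ ⟨i, rfl⟩ x ⟨hx, hxi⟩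
    obtain ⟨j, rfl⟩ := hmsg ▸ hx
    have hji : j ≤ i.castLE hke := hmono.le_iff_le.1 hxi
    exact ⟨⟨j, lt_of_le_of_lt hji i.isLt⟩, rfl⟩
  · have : Nontrivial (Fin k) := Fin.nontrivial_iff_two_le.2 hk
    exact Set.image_univ ▸ Set.nontrivial_univ.image hinj
  · rw [msg_gen_of_subset_msg (M := hM.1.toAddSubmonoid) hA, Set.ncard_range_of_injective hinj,
      Nat.card_fin]

theorem stmt17 (S : Set ℕ) (e : ℕ) (he : 2 ≤ e) (n : Fin (e + 1) → ℕ)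
    (hmono : StrictMono n) (hmsg : msg S = Set.range n) (hM : IsMANS S) :
    IsMANS (gen (Set.range fun i : Fin e => n i.castSucc)) ∧
      (msg (gen (Set.range fun i : Fin e => n i.castSucc))).ncard = (msg S).ncard - 1 := by
  rw [hmsg, Set.ncard_range_of_injective hmono.injective, Nat.card_fin]
  exact stmt17_general he e.le_succ hmono hmsg hM
end
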